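/- (Theorem 6, Policy Evaluation for the KL-Regularized Game) The regularized (N,k)-pessimistic evaluation operator is a γ-contraction for the sup norm: for all Q1, Q2 : S × A → ℝ, ‖B̄^π_{N,k;μ} Q1 − B̄^π_{N,k;μ} Q2‖_∞ ≤ γ · ‖Q1 − Q2‖_∞; consequently it has a unique fixed point Q̄^π_{N,k;μ}, to which the iterates from any starting point converge in sup norm. -/

import Mathlib

/-- `kmin x k` is the entry in position `k` (0-indexed) of a monotone nondecreasing
sorted arrangement of the tuple `x`, i.e. the `(k+1)`-th smallest entry counted with
multiplicity. -/
noncomputable def kmin {N : ℕ} (x : Fin N → ℝ) (k : Fin N) : ℝ := x (Tuple.sort x k)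

/-- A probability mass function on a finite type: nonnegative and summing to one. -/
def IsPMF {α : Type*} [Fintype α] (p : α → ℝ) : Prop :=
  (∀ a, 0 ≤ p a) ∧ ∑ a, p a = 1

/-- Sup norm `‖Q‖_∞ = max_{(s,a)} |Q(s,a)|` on `S × A → ℝ` (curried). -/
noncomputable def supNorm {S A : Type*} [Fintype S] [Fintype A] [Nonempty S] [Nonempty A]
    (Q : S → A → ℝ) : ℝ :=
  Finset.univ.sup' Finset.univ_nonempty (fun p : S × A => |Q p.1 p.2|)

/-- The `(N,k)`-pessimistic Bellman operator (with `k` given 0-indexed as `k : Fin N`):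
`(B^π_{N,k} Q)(s,a) = r(s,a) + γ · Σ_{v : Fin N → ι} (Π_j P(v_j)) ·
  kmin_k( j ↦ Σ_{s'} M(v_j)(s,a)(s') · Σ_{a'} π(a'|s') · Q(s',a') )`. -/
noncomputable def pessBellman {S A ι : Type*} [Fintype S] [Fintype A] [Fintype ι]
    (r : S → A → ℝ) (γ : ℝ) (P : ι → ℝ) (M : ι → S → A → S → ℝ)
    (π : S → A → ℝ) (N : ℕ) (k : Fin N) (Q : S → A → ℝ) : S → A → ℝ :=
  fun s a => r s a + γ * ∑ v : Fin N → ι, (∏ j, P (v j)) *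
    kmin (fun j => ∑ s', M (v j) s a s' * ∑ a', π s' a' * Q s' a') k

/-- Kullback–Leibler divergence `KL(p‖q) = Σ_a p(a)·log(p(a)/q(a))` on a finite type
(with the convention `0·log 0 = 0`, automatic here). -/
noncomputable def KLdiv {α : Type*} [Fintype α] (p q : α → ℝ) : ℝ :=
  ∑ a, p a * Real.log (p a / q a)

/-- The soft `(N,k)`-pessimistic Bellman operator with reference policy `μ` and
coefficient `α` (with `k` given 0-indexed as `k : Fin N`):
`(B̄*_{N,k;μ} Q)(s,a) = r(s,a) + γ · Σ_{v} (Π_j P(v_j)) ·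
  kmin_k( j ↦ Σ_{s'} M(v_j)(s,a)(s') · α·log Σ_{a'} μ(a'|s')·exp(Q(s',a')/α) )`. -/
noncomputable def softBellman {S A ι : Type*} [Fintype S] [Fintype A] [Fintype ι]
    (r : S → A → ℝ) (γ : ℝ) (P : ι → ℝ) (M : ι → S → A → S → ℝ)
    (μ : S → A → ℝ) (α : ℝ) (N : ℕ) (k : Fin N) (Q : S → A → ℝ) : S → A → ℝ :=
  fun s a => r s a + γ * ∑ v : Fin N → ι, (∏ j, P (v j)) *
    kmin (fun j => ∑ s', M (v j) s a s' *
      (α * Real.log (∑ a', μ s' a' * Real.exp (Q s' a' / α)))) k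

/-- The regularized `(N,k)`-pessimistic evaluation operator for policy `π`, reference
policy `μ` and coefficient `α` (with `k` given 0-indexed as `k : Fin N`):
`(B̄^π_{N,k;μ} Q)(s,a) = r(s,a) + γ · Σ_{v} (Π_j P(v_j)) ·
  kmin_k( j ↦ Σ_{s'} M(v_j)(s,a)(s') · (Σ_{a'} π(a'|s')·Q(s',a') − α·KL(π(·|s')‖μ(·|s'))) )`. -/
noncomputable def regBellman {S A ι : Type*} [Fintype S] [Fintype A] [Fintype ι]
    (r : S → A → ℝ) (γ : ℝ) (P : ι → ℝ) (M : ι → S → A → S → ℝ)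
    (π μ : S → A → ℝ) (α : ℝ) (N : ℕ) (k : Fin N) (Q : S → A → ℝ) : S → A → ℝ :=
  fun s a => r s a + γ * ∑ v : Fin N → ι, (∏ j, P (v j)) *
    kmin (fun j => ∑ s', M (v j) s a s' *
      ((∑ a', π s' a' * Q s' a') - α * KLdiv (π s') (μ s'))) k

theorem kmin_le_add {N : ℕ} (x y : Fin N → ℝ) (c : ℝ) (k : Fin N)
    (h : ∀ j, x j ≤ y j + c) : kmin x k ≤ kmin y k + c := by
  have hne : ∃ i j : Fin N, k ≤ i ∧ j ≤ k ∧ Tuple.sort x i = Tuple.sort y j := by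
    by_contra hcon
    push Not at hcon
    have hd : Disjoint ((Finset.Ici k).map (Tuple.sort x).toEmbedding)
        ((Finset.Iic k).map (Tuple.sort y).toEmbedding) := by
      rw [Finset.disjoint_left]
      intro m hm1 hm2
      simp only [Finset.mem_map, Finset.mem_Ici, Finset.mem_Iic, Equiv.coe_toEmbedding] at hm1 hm2
      obtain ⟨i, hi, rfl⟩ := hm1
      obtain ⟨j, hj, hij⟩ := hm2
      exact hcon i j hi hj hij.symm
    have hc := Finset.card_le_univ (((Finset.Ici k).map (Tuple.sort x).toEmbedding) ∪
        ((Finset.Iic k).map (Tuple.sort y).toEmbedding))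
    rw [Finset.card_union_of_disjoint hd] at hc
    simp only [Finset.card_map, Fin.card_Ici, Fin.card_Iic, Fintype.card_fin] at hc
    have := k.isLt
    omega
  obtain ⟨i, j, hi, hj, hij⟩ := hne
  have h1 : x (Tuple.sort x k) ≤ x (Tuple.sort x i) := Tuple.monotone_sort x hi
  have h2 : y (Tuple.sort y j) ≤ y (Tuple.sort y k) := Tuple.monotone_sort y hj
  have h3 := h (Tuple.sort x i)
  unfold kmin
  rw [hij] at h1 h3
  linarith

theorem wsum_le_add {β : Type*} [Fintype β] (p : β → ℝ) (hp : IsPMF p) (f g : β → ℝ) (c : ℝ)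
    (h : ∀ b, f b ≤ g b + c) : ∑ b, p b * f b ≤ (∑ b, p b * g b) + c := by
  calc ∑ b, p b * f b ≤ ∑ b, (p b * g b + p b * c) := by
        refine Finset.sum_le_sum fun b _ => ?_
        rw [← mul_add]
        exact mul_le_mul_of_nonneg_left (h b) (hp.1 b)
    _ = _ := by rw [Finset.sum_add_distrib, ← Finset.sum_mul, hp.2, one_mul]

theorem isPMF_prod {ι : Type*} [Fintype ι] (P : ι → ℝ) (hP : IsPMF P) (N : ℕ) :
    IsPMF (fun v : Fin N → ι => ∏ j, P (v j)) := by
  classical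
  refine ⟨fun v => Finset.prod_nonneg fun j _ => hP.1 _, ?_⟩
  have := Finset.prod_univ_sum (fun _ : Fin N => (Finset.univ : Finset ι)) (fun _ i => P i)
  rw [Fintype.piFinset_univ] at this
  rw [← this]
  simp [hP.2]

theorem supNorm_eq_norm {S A : Type*} [Fintype S] [Fintype A] [Nonempty S] [Nonempty A]
    (Q : S → A → ℝ) : supNorm Q = ‖Q‖ := by
  unfold supNorm
  apply le_antisymm
  · refine Finset.sup'_le _ _ fun p _ => ?_
    exact (norm_le_pi_norm (Q p.1) p.2).trans (norm_le_pi_norm Q p.1)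
  · have hle : ∀ s a, |Q s a| ≤ Finset.univ.sup' Finset.univ_nonempty
        (fun p : S × A => |Q p.1 p.2|) := fun s a =>
      Finset.le_sup' (fun p : S × A => |Q p.1 p.2|) (Finset.mem_univ (s, a))
    refine (pi_norm_le_iff_of_nonempty _).2 fun s => (pi_norm_le_iff_of_nonempty _).2 fun a => ?_
    exact hle s a

theorem regBellman_le {S A ι : Type*} [Fintype S] [Fintype A] [Fintype ι]
    (r : S → A → ℝ) (γ : ℝ) (hγ0 : 0 ≤ γ)
    (π : S → A → ℝ) (hπ : ∀ s, IsPMF (π s)) (μ : S → A → ℝ) (α : ℝ)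
    (P : ι → ℝ) (hP : IsPMF P)
    (M : ι → S → A → S → ℝ) (hM : ∀ v s a, IsPMF (M v s a))
    (N : ℕ) (k : Fin N) (Q1 Q2 : S → A → ℝ) (c : ℝ) (h : ∀ s a, Q1 s a ≤ Q2 s a + c)
    (s : S) (a : A) :
    regBellman r γ P M π μ α N k Q1 s a ≤ regBellman r γ P M π μ α N k Q2 s a + γ * c := by
  unfold regBellman
  rw [add_assoc, ← mul_add]
  refine add_le_add le_rfl (mul_le_mul_of_nonneg_left ?_ hγ0)
  refine wsum_le_add _ (isPMF_prod P hP N) _ _ c fun v => ?_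
  refine kmin_le_add _ _ c k fun j => ?_
  refine wsum_le_add _ (hM _ s a) _ _ c fun s' => ?_
  have := wsum_le_add _ (hπ s') (Q1 s') (Q2 s') c (h s')
  linarith

theorem regBellman_norm {S A ι : Type*} [Fintype S] [Fintype A] [Fintype ι]
    [Nonempty S] [Nonempty A]
    (r : S → A → ℝ) (γ : ℝ) (hγ0 : 0 ≤ γ)
    (π : S → A → ℝ) (hπ : ∀ s, IsPMF (π s)) (μ : S → A → ℝ) (α : ℝ)
    (P : ι → ℝ) (hP : IsPMF P)
    (M : ι → S → A → S → ℝ) (hM : ∀ v s a, IsPMF (M v s a))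
    (N : ℕ) (k : Fin N) (Q1 Q2 : S → A → ℝ) :
    ‖regBellman r γ P M π μ α N k Q1 - regBellman r γ P M π μ α N k Q2‖ ≤ γ * ‖Q1 - Q2‖ := by
  have hb : ∀ s a, |Q1 s a - Q2 s a| ≤ ‖Q1 - Q2‖ := fun s a =>
    (norm_le_pi_norm ((Q1 - Q2) s) a).trans (norm_le_pi_norm (Q1 - Q2) s)
  refine (pi_norm_le_iff_of_nonempty _).2 fun s => (pi_norm_le_iff_of_nonempty _).2 fun a => ?_
  have h1 := regBellman_le r γ hγ0 π hπ μ α P hP M hM N k Q1 Q2 ‖Q1 - Q2‖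
    (fun s a => by linarith [(abs_le.1 (hb s a)).2]) s a
  have h2 := regBellman_le r γ hγ0 π hπ μ α P hP M hM N k Q2 Q1 ‖Q1 - Q2‖
    (fun s a => by linarith [(abs_le.1 (hb s a)).1]) s a
  simp only [Pi.sub_apply, Real.norm_eq_abs]
  exact abs_le.2 ⟨by linarith, by linarith⟩

/-- Theorem 6 (Policy Evaluation for the KL-Regularized Game): the regularized
`(N,k)`-pessimistic evaluation operator is a `γ`-contraction for the sup norm;
consequently it has a unique fixed point, to which the iterates from any starting point
converge in sup norm. -/
theorem regBellman_contraction {S A ι : Type*} [Fintype S] [Fintype A] [Fintype ι]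
    [Nonempty S] [Nonempty A] [Nonempty ι]
    (r : S → A → ℝ) (γ : ℝ) (hγ0 : 0 ≤ γ) (hγ1 : γ < 1)
    (π : S → A → ℝ) (hπ : ∀ s, IsPMF (π s))
    (μ : S → A → ℝ) (hμ : ∀ s, IsPMF (μ s)) (hμpos : ∀ s a, 0 < μ s a)
    (α : ℝ) (hα : 0 < α)
    (P : ι → ℝ) (hP : IsPMF P)
    (M : ι → S → A → S → ℝ) (hM : ∀ v s a, IsPMF (M v s a))
    (N : ℕ) (hN : 1 ≤ N) (k : ℕ) (hk1 : 1 ≤ k) (hkN : k ≤ N) :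
    (∀ Q1 Q2 : S → A → ℝ,
      supNorm (fun s a => regBellman r γ P M π μ α N ⟨k - 1, by omega⟩ Q1 s a
          - regBellman r γ P M π μ α N ⟨k - 1, by omega⟩ Q2 s a)
        ≤ γ * supNorm (fun s a => Q1 s a - Q2 s a)) ∧
    (∃! Qfix : S → A → ℝ, regBellman r γ P M π μ α N ⟨k - 1, by omega⟩ Qfix = Qfix) ∧
    (∀ Qfix : S → A → ℝ, regBellman r γ P M π μ α N ⟨k - 1, by omega⟩ Qfix = Qfix →
      ∀ Q : S → A → ℝ,
        Filter.Tendsto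
          (fun n => supNorm
            (fun s a => (regBellman r γ P M π μ α N ⟨k - 1, by omega⟩)^[n] Q s a - Qfix s a))
          Filter.atTop (nhds 0)) := by
  have key := regBellman_norm r γ hγ0 π hπ μ α P hP M hM N ⟨k - 1, by omega⟩
  have hc : ContractingWith ⟨γ, hγ0⟩ (regBellman r γ P M π μ α N ⟨k - 1, by omega⟩) := by
    refine ⟨by exact_mod_cast hγ1, LipschitzWith.of_dist_le_mul fun Q1 Q2 => ?_⟩
    rw [dist_eq_norm, dist_eq_norm]
    exact key Q1 Q2
  refine ⟨fun Q1 Q2 => ?_, ?_, fun Qfix hfix Q => ?_⟩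
  · rw [supNorm_eq_norm, supNorm_eq_norm]
    exact key Q1 Q2
  · exact ⟨_, hc.fixedPoint_isFixedPt, fun Q hQ => hc.fixedPoint_unique hQ⟩
  · have ht := hc.tendsto_iterate_fixedPoint Q
    rw [← hc.fixedPoint_unique hfix] at ht
    have ht2 := tendsto_iff_norm_sub_tendsto_zero.1 ht
    refine ht2.congr fun n => ?_
    rw [supNorm_eq_norm]
    rfl
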